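/- arXiv:1311.2755 — 5 statements merged into one kernel-verified Lean document; each statement's English description precedes it below -/
import Mathlib

section
/- Let y : ℝ → ℝ be twice differentiable on an interval I ⊆ (0,∞) with y'(x) ≠ 0 and 3(y'(x))² ≠ 1 for all x ∈ I. If the quantity x·y'(x)/((y'(x))² + 1)² has zero derivative on I (i.e., the Euler–Lagrange condition d/dx[∂Φ/∂ẏ] = 0 holds for Φ(x,y,ẏ) = 2x/(ẏ² + 1), whose integrand has no explicit y-dependence), then y satisfies Newton's differential equation y''(x) = y'(x)·((y'(x))² + 1) / (x·(3(y'(x))² − 1)) on I. -/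
/-- If the Euler–Lagrange first integral `x·y'(x)/((y'(x))² + 1)²` has zero
derivative on an interval `I ⊆ (0,∞)` where `y` is twice differentiable, `y' ≠ 0` and
`3(y')² ≠ 1`, then `y` satisfies Newton's differential equation on `I`. -/
theorem newton_euler_lagrange_implies_ode
    (I : Set ℝ) (hI : I ⊆ Set.Ioi (0 : ℝ)) (hIconv : Convex ℝ I)
    (y y' y'' : ℝ → ℝ)
    (hy : ∀ x ∈ I, HasDerivAt y (y' x) x)
    (hy' : ∀ x ∈ I, HasDerivAt y' (y'' x) x)
    (hy'ne : ∀ x ∈ I, y' x ≠ 0)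
    (h3 : ∀ x ∈ I, 3 * (y' x) ^ 2 ≠ 1)
    (hEL : ∀ x ∈ I, HasDerivAt (fun t => t * y' t / ((y' t) ^ 2 + 1) ^ 2) 0 x) :
    ∀ x ∈ I, y'' x = y' x * ((y' x) ^ 2 + 1) / (x * (3 * (y' x) ^ 2 - 1)) := by
  intro x hx
  have hx0 : x ≠ 0 := ne_of_gt (hI hx)
  have hp := hy' x hx
  have hs : (3 * (y' x) ^ 2 - 1) ≠ 0 := sub_ne_zero.mpr (h3 x hx)
  have hq : (y' x) ^ 2 + 1 ≠ 0 := by positivity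
  have hD := ((hasDerivAt_id x).mul hp).div (((hp.pow 2).add_const 1).pow 2)
    (by simpa using pow_ne_zero 2 hq)
  have hE := hD.unique (hEL x hx)
  simp only [Pi.mul_apply, Pi.pow_apply, id] at hE
  rw [div_eq_zero_iff] at hE
  rcases hE with hE | hE
  · norm_num at hE
    rw [eq_div_iff (mul_ne_zero hx0 hs)]
    apply mul_left_cancel₀ hq
    linear_combination -hE
  · exact absurd hE (pow_ne_zero 2 (pow_ne_zero 2 hq))
end

section
/- Let y : ℝ → ℝ be twice differentiable on an interval I ⊆ (0,∞) and satisfy Newton's differential equation y''(x) = y'(x)·((y'(x))² + 1) / (x·(3(y'(x))² − 1)) on I, where 3(y'(x))² ≠ 1 on I. Then the function x ↦ x·y'(x)/((y'(x))² + 1)² has derivative zero on I; in particular it is constant on I (a first integral of Newton's equation). -/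
/-- If `y` is twice differentiable on an interval `I ⊆ (0,∞)` and satisfies
Newton's differential equation there (with `3(y')² ≠ 1`), then `x ↦ x·y'(x)/((y'(x))² + 1)²`
has derivative zero on `I`; in particular it is constant on `I`. -/
theorem newton_ode_first_integral
    (I : Set ℝ) (hI : I ⊆ Set.Ioi (0 : ℝ)) (hIconv : Convex ℝ I)
    (y y' y'' : ℝ → ℝ)
    (hy : ∀ x ∈ I, HasDerivAt y (y' x) x)
    (hy' : ∀ x ∈ I, HasDerivAt y' (y'' x) x)
    (h3 : ∀ x ∈ I, 3 * (y' x) ^ 2 ≠ 1)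
    (hODE : ∀ x ∈ I,
      y'' x = y' x * ((y' x) ^ 2 + 1) / (x * (3 * (y' x) ^ 2 - 1))) :
    (∀ x ∈ I, HasDerivAt (fun t => t * y' t / ((y' t) ^ 2 + 1) ^ 2) 0 x) ∧
      ∀ x ∈ I, ∀ z ∈ I,
        x * y' x / ((y' x) ^ 2 + 1) ^ 2 = z * y' z / ((y' z) ^ 2 + 1) ^ 2 := by
  have key : ∀ x ∈ I, HasDerivAt (fun t => t * y' t / ((y' t) ^ 2 + 1) ^ 2) 0 x := by
    intro x hx
    have hx0 : x ≠ 0 := ne_of_gt (hI hx)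
    have h3' : 3 * (y' x) ^ 2 - 1 ≠ 0 := sub_ne_zero.mpr (h3 x hx)
    have hp : (y' x) ^ 2 + 1 ≠ 0 := by positivity
    have e : x * y'' x * (3 * (y' x) ^ 2 - 1) = y' x * ((y' x) ^ 2 + 1) := by
      rw [hODE x hx, mul_right_comm, mul_div_cancel₀ _ (mul_ne_zero hx0 h3')]
    have hd := hy' x hx
    have hden : HasDerivAt (fun t => ((y' t) ^ 2 + 1) ^ 2)
        (2 * ((y' x) ^ 2 + 1) * (2 * y' x * y'' x)) x := by
      have := ((hd.fun_pow 2).add_const 1).fun_pow 2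
      refine this.congr_deriv ?_
      norm_num
    have h := ((hasDerivAt_id' x).fun_mul hd).fun_div hden (pow_ne_zero 2 hp)
    refine h.congr_deriv ?_
    rw [div_eq_zero_iff]
    left
    linear_combination (-((y' x) ^ 2 + 1)) * e
  refine ⟨key, fun x hx z hz => ?_⟩
  have h := hIconv.norm_image_sub_le_of_norm_hasDerivWithin_le (C := 0)
    (fun w hw => (key w hw).hasDerivWithinAt) (fun w _ => by simp) hz hx
  rw [zero_mul] at h
  exact sub_eq_zero.mp (norm_le_zero_iff.mp h)
end

section
/- Let r, h > 0, a* > 0, and let y* : ℝ → ℝ be twice differentiable, satisfying Newton's differential equation (y*)''(x) = (y*)'(x)·(((y*)'(x))² + 1)/(x·(3((y*)'(x))² − 1)) on [a*, r*] with 3((y*)'(x))² ≠ 1, together with the initial conditions y*(a*) = 0 and (y*)'(a*) = 1, where r* > a* satisfies the event condition r* = r·y*(r*)/h. Set λ := y*(r*)/h and assume λ > 0. Then the function y(x) := λ⁻¹·y*(λx) satisfies Newton's differential equation on [a*/λ, r], and with a := a*/λ it satisfies y(a) = 0, y'(a) = 1, and y(r) = h; i.e., y solves Newton's free boundary problem with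 free boundary a = a*/λ. -/
/-- The non-iterative transformation method. If `y*` solves the auxiliary
initial value problem (Newton's equation on `[a*, r*]`, `y*(a*) = 0`, `(y*)'(a*) = 1`)
where `r*` satisfies the event condition `r* = r·y*(r*)/h`, and `λ = y*(r*)/h > 0`,
then `y(x) = λ⁻¹·y*(λx)` solves Newton's free boundary problem with free boundary
`a = a*/λ`: it satisfies the equation on `[a*/λ, r]` with `y(a) = 0`, `y'(a) = 1`,
`y(r) = h`. -/
theorem newton_nonITM
    (r h astar rstar : ℝ) (hr : 0 < r) (hh : 0 < h)
    (hastar : 0 < astar) (hrstar : astar < rstar)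
    (ystar : ℝ → ℝ)
    (hy : Differentiable ℝ ystar) (hy' : Differentiable ℝ (deriv ystar))
    (h3 : ∀ x ∈ Set.Icc astar rstar, 3 * (deriv ystar x) ^ 2 ≠ 1)
    (hODE : ∀ x ∈ Set.Icc astar rstar,
      deriv (deriv ystar) x =
        deriv ystar x * ((deriv ystar x) ^ 2 + 1) /
          (x * (3 * (deriv ystar x) ^ 2 - 1)))
    (hinit0 : ystar astar = 0) (hinit1 : deriv ystar astar = 1)
    (hevent : rstar = r * ystar rstar / h)
    (lam : ℝ) (hlamdef : lam = ystar rstar / h) (hlam : 0 < lam) :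
    (∀ x ∈ Set.Icc (astar / lam) r,
      deriv (deriv (fun t => lam⁻¹ * ystar (lam * t))) x =
        deriv (fun t => lam⁻¹ * ystar (lam * t)) x *
          ((deriv (fun t => lam⁻¹ * ystar (lam * t)) x) ^ 2 + 1) /
          (x * (3 * (deriv (fun t => lam⁻¹ * ystar (lam * t)) x) ^ 2 - 1))) ∧
    (fun t => lam⁻¹ * ystar (lam * t)) (astar / lam) = 0 ∧
    deriv (fun t => lam⁻¹ * ystar (lam * t)) (astar / lam) = 1 ∧
    (fun t => lam⁻¹ * ystar (lam * t)) r = h := by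
  have hl : lam ≠ 0 := hlam.ne'
  have hrs : rstar = lam * r := by rw [hlamdef]; rw [mul_comm, ← mul_div_assoc]; exact hevent
  have hlin : ∀ t : ℝ, HasDerivAt (fun t => lam * t) lam t := fun t => by
    simpa using (hasDerivAt_id t).const_mul lam
  have hd : deriv (fun t => lam⁻¹ * ystar (lam * t)) = fun t => deriv ystar (lam * t) := by
    funext t
    have h1 := (((hy (lam * t)).hasDerivAt).comp t (hlin t)).const_mul lam⁻¹
    have h2 : deriv (fun t => lam⁻¹ * ystar (lam * t)) t
        = lam⁻¹ * (deriv ystar (lam * t) * lam) := h1.deriv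
    rw [h2]; field_simp
  have hdd : ∀ t, deriv (fun t => deriv ystar (lam * t)) t
      = deriv (deriv ystar) (lam * t) * lam := fun t =>
    (((hy' (lam * t)).hasDerivAt).comp t (hlin t)).deriv
  have hla : lam * (astar / lam) = astar := by field_simp
  rw [hd]
  refine ⟨?_, ?_, ?_, ?_⟩
  · intro x hx
    have hmem : lam * x ∈ Set.Icc astar rstar := by
      refine ⟨?_, ?_⟩
      · rw [← hla]; exact mul_le_mul_of_nonneg_left hx.1 hlam.le
      · rw [hrs]; exact mul_le_mul_of_nonneg_left hx.2 hlam.le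
    rw [hdd, hODE _ hmem]
    rw [mul_assoc lam x, div_mul_eq_mul_div, mul_comm _ lam, mul_div_mul_left _ _ hl]
  · simp only [hla, hinit0, mul_zero]
  · simp only [hla, hinit1]
  · have hyr : ystar rstar = lam * h := by rw [hlamdef]; field_simp
    simp only [← hrs, hyr]
    field_simp
end

section
/- The function g : [0, 1] → ℝ defined by g(a) = a² + (1 − a)²(1 − a²)/(1 + (1 − a)²) attains its minimum on [0, 1] at a = (3 − √5)/2, and the minimum value equals (3 − √5)/2 ≈ 0.3820. Hence the optimal flat-tipped conical frustum with r = h = 1 has tip radius (3 − √5)/2 and reduced drag coefficient k* = (3 − √5)/2. -/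
/-- The function `g(a) = a² + (1 − a)²(1 − a²)/(1 + (1 − a)²)` attains its
minimum on `[0, 1]` at `a = (3 − √5)/2`, and the minimum value equals `(3 − √5)/2`:
the optimal flat-tipped conical frustum with `r = h = 1` has tip radius `(3 − √5)/2`
and reduced drag coefficient `k* = (3 − √5)/2`. -/
theorem frustum_optimal_tip :
    ((3 - Real.sqrt 5) / 2 ∈ Set.Icc (0:ℝ) 1) ∧
    IsMinOn (fun a : ℝ => a ^ 2 + (1 - a) ^ 2 * (1 - a ^ 2) / (1 + (1 - a) ^ 2))
      (Set.Icc (0:ℝ) 1) ((3 - Real.sqrt 5) / 2) ∧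
    (fun a : ℝ => a ^ 2 + (1 - a) ^ 2 * (1 - a ^ 2) / (1 + (1 - a) ^ 2))
        ((3 - Real.sqrt 5) / 2) = (3 - Real.sqrt 5) / 2 := by
  have h5 : Real.sqrt 5 ^ 2 = 5 := Real.sq_sqrt (by norm_num)
  have h0 : 0 ≤ Real.sqrt 5 := Real.sqrt_nonneg 5
  obtain ⟨c, hc⟩ : ∃ c, c = (3 - Real.sqrt 5) / 2 := ⟨_, rfl⟩
  have hc2 : c ^ 2 = 3 * c - 1 := by rw [hc]; nlinarith
  have hc0 : 0 ≤ c := by rw [hc]; nlinarith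
  have hc1 : c ≤ 1 := by rw [hc]; nlinarith
  rw [← hc]
  have key : ∀ a : ℝ, a ^ 2 + (1 - a) ^ 2 * (1 - a ^ 2) / (1 + (1 - a) ^ 2)
      = c + (2 - c) * (a - c) ^ 2 / (1 + (1 - a) ^ 2) := by
    intro a
    have : 1 + (1 - a) ^ 2 ≠ 0 := by positivity
    field_simp
    linear_combination (c - 1 - 2 * a + 2 - 2 + 2) * hc2 - 0
  have hval : c ^ 2 + (1 - c) ^ 2 * (1 - c ^ 2) / (1 + (1 - c) ^ 2) = c := by
    rw [key]; simp
  refine ⟨⟨hc0, hc1⟩, ?_, hval⟩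
  intro a _
  simp only [Set.mem_setOf_eq]
  rw [hval, key a]
  have h2 : 0 ≤ 2 - c := by linarith
  have : 0 ≤ (2 - c) * (a - c) ^ 2 / (1 + (1 - a) ^ 2) := by positivity
  linarith
end

section
/- For every constant C ∈ ℝ, the function u : (0,∞) → ℝ defined by u(s) = s·(s² − ln s + 3s⁴/4 + C)/(s² + 1)² is differentiable and satisfies the reduced first-order equation u'(s) = (s − u(s))·(3s² − 1)/(s·(s² + 1)) for all s > 0. -/
/-- For every constant `C`, the function
`u(s) = s·(s² − ln s + 3s⁴/4 + C)/(s² + 1)²` is differentiable on `(0,∞)` and satisfies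
the reduced first-order equation `u'(s) = (s − u(s))·(3s² − 1)/(s·(s² + 1))`. -/
theorem reduced_equation_closed_form_solution (C : ℝ) :
    ∀ s : ℝ, 0 < s →
      HasDerivAt
        (fun s : ℝ => s * (s ^ 2 - Real.log s + 3 * s ^ 4 / 4 + C) / (s ^ 2 + 1) ^ 2)
        ((s - s * (s ^ 2 - Real.log s + 3 * s ^ 4 / 4 + C) / (s ^ 2 + 1) ^ 2) *
          (3 * s ^ 2 - 1) / (s * (s ^ 2 + 1))) s := by
  intro s hs
  have hne : s ≠ 0 := hs.ne'
  have hq : s ^ 2 + 1 ≠ 0 := by positivity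
  have h2 : HasDerivAt (fun s : ℝ => s ^ 2) (2 * s) s := by
    simpa using hasDerivAt_pow 2 s
  have h4 : HasDerivAt (fun s : ℝ => s ^ 4) (4 * s ^ 3) s := by
    simpa using hasDerivAt_pow 4 s
  have hG : HasDerivAt (fun s : ℝ => s ^ 2 - Real.log s + 3 * s ^ 4 / 4 + C)
      (2 * s - s⁻¹ + 3 * (4 * s ^ 3) / 4) s :=
    ((h2.sub (Real.hasDerivAt_log hne)).add ((h4.const_mul 3).div_const 4)).add_const C
  have hD : HasDerivAt (fun s : ℝ => (s ^ 2 + 1) ^ 2) (2 * (s ^ 2 + 1) * (2 * s)) s := by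
    exact ((h2.add_const 1).pow 2).congr_deriv (by simp)
  have h := ((hasDerivAt_id' s).mul hG).div hD (pow_ne_zero 2 hq)
  refine h.congr_deriv ?_
  simp only [Pi.mul_apply]
  generalize Real.log s = L
  field_simp
  ring
end
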